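/- In the digroup Disgp⟨X^{±1} ∪ {e} | S⟩ with unit the class of [e]_1, for every normal form [q]_n ∈ Ω_e ∪ Ω_X ∪ Ω_{X⁻¹}, the inverse (class of [q]_n)† equals the class of [e(q̂)⁻¹]_1 if the formal inverse (q̂)⁻¹ of the reduced word q̂ lies in X*, and equals the class of [(q̂)⁻¹]_{λ((q̂)⁻¹)} otherwise. -/

import Mathlib

/-- The alphabet X^{±1} ∪ {e}: letters x, x⁻¹ (for x ∈ X) and the symbol e. -/
inductive Letter (X : Type*) : Type _
  | pos : X → Letter X
  | neg : X → Letter X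
  | e   : Letter X

/-- The free disemigroup on Y: an element [u]_m (u a nonempty word, 1 ≤ m ≤ |u|)
is encoded as the triple (prefix before the center, center letter, suffix),
so `⟨p, c, s⟩` stands for `[p·c·s]_{|p|+1}`. -/
structure FD (Y : Type*) where
  pre : List Y
  cen : Y
  suf : List Y

namespace FD

/-- [u]_m ⊢ [v]_n = [uv]_{|u|+n}. -/
def vd {Y : Type*} (a b : FD Y) : FD Y :=
  ⟨a.pre ++ a.cen :: (a.suf ++ b.pre), b.cen, b.suf⟩

/-- [u]_m ⊣ [v]_n = [uv]_m. -/
def dv {Y : Type*} (a b : FD Y) : FD Y :=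
  ⟨a.pre, a.cen, a.suf ++ b.pre ++ b.cen :: b.suf⟩

/-- The underlying associative word of [u]_m. -/
def word {Y : Type*} (a : FD Y) : List Y := a.pre ++ a.cen :: a.suf

end FD

/-- The congruence ρ(r) on the free disemigroup generated by a set of relations r:
the smallest equivalence relation containing r compatible with ⊢ and ⊣. -/
inductive DCongr {Y : Type*} (r : FD Y → FD Y → Prop) : FD Y → FD Y → Prop
  | of {a b : FD Y} : r a b → DCongr r a b
  | refl (a : FD Y) : DCongr r a a
  | symm {a b : FD Y} : DCongr r a b → DCongr r b a
  | trans {a b c : FD Y} : DCongr r a b → DCongr r b c → DCongr r a c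
  | vd {a b c d : FD Y} : DCongr r a b → DCongr r c d → DCongr r (a.vd c) (b.vd d)
  | dv {a b c d : FD Y} : DCongr r a b → DCongr r c d → DCongr r (a.dv c) (b.dv d)

/-- The defining relations S of the free digroup:
[xx⁻¹]₂ = [e]₁, [x⁻¹x]₁ = [e]₁, [ye]₁ = [y]₁, [ey]₂ = [y]₁. -/
def rel (X : Type*) : FD (Letter X) → FD (Letter X) → Prop := fun a b =>
  (∃ x : X, a = ⟨[Letter.pos x], Letter.neg x, []⟩ ∧ b = ⟨[], Letter.e, []⟩) ∨
  (∃ x : X, a = ⟨[], Letter.neg x, [Letter.pos x]⟩ ∧ b = ⟨[], Letter.e, []⟩) ∨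
  (∃ y : Letter X, a = ⟨[], y, [Letter.e]⟩ ∧ b = ⟨[], y, []⟩) ∨
  (∃ y : Letter X, a = ⟨[Letter.e], y, []⟩ ∧ b = ⟨[], y, []⟩)

/-- The quotient disemigroup Disgp⟨X^{±1} ∪ {e} | S⟩. -/
def DQ (X : Type*) := Quot (DCongr (rel X))

/-- The class of an element of the free disemigroup in the quotient. -/
def cls {X : Type*} (a : FD (Letter X)) : DQ X := Quot.mk _ a

/-- The operation ⊢ on the quotient. -/
def DQ.vd {X : Type*} : DQ X → DQ X → DQ X :=
  Quot.map₂ FD.vd (fun a _ _ h => DCongr.vd (DCongr.refl a) h)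
    (fun _ _ b h => DCongr.vd h (DCongr.refl b))

/-- The operation ⊣ on the quotient. -/
def DQ.dv {X : Type*} : DQ X → DQ X → DQ X :=
  Quot.map₂ FD.dv (fun a _ _ h => DCongr.dv (DCongr.refl a) h)
    (fun _ _ b h => DCongr.dv h (DCongr.refl b))

/-- The class of [e]₁, the unit of the free digroup. -/
def unitE (X : Type*) : DQ X := cls ⟨[], Letter.e, []⟩

/-- Words over X^{±1} are lists of pairs (x, b), where (x, true) is x and
(x, false) is x⁻¹, as for `FreeGroup`. This converts such a pair to a `Letter`. -/
def pm {X : Type*} (p : X × Bool) : Letter X :=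
  if p.2 then Letter.pos p.1 else Letter.neg p.1

/-- A word over X^{±1} is reduced (lies in gp⟨X⟩) if it has no adjacent pair
of mutually inverse letters. -/
def Reduced {X : Type*} (L : List (X × Bool)) : Prop :=
  List.Chain' (fun a b => ¬(a.1 = b.1 ∧ a.2 = !b.2)) L

/-- Delete all occurrences of e from a word over X^{±1} ∪ {e} (the map τ). -/
def strip {X : Type*} (L : List (Letter X)) : List (X × Bool) :=
  L.flatMap fun l => match l with
    | Letter.pos x => [(x, true)]
    | Letter.neg x => [(x, false)]
    | Letter.e => []

/-- ŵ: the reduced word of w, obtained by deleting the e's and freely reducing. -/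
noncomputable def hat {X : Type*} (L : List (Letter X)) : List (X × Bool) :=
  letI := Classical.decEq X
  FreeGroup.reduce (strip L)

/-- λ(w): the (1-based) position of the first letter of w lying in X⁻¹. -/
def lam {X : Type*} (L : List (X × Bool)) : ℕ := L.findIdx (fun p => !p.2) + 1

/-- The element [L]_m of the free disemigroup determined by a word L over X^{±1}
and a center position m. -/
def toNF {X : Type*} (L : List (X × Bool)) (m : ℕ) : FD (Letter X) :=
  ⟨(L.take (m - 1)).map pm, ((L[m-1]?).map pm).getD Letter.e, (L.drop m).map pm⟩

/-- Ω_e = {[eu]₁ : u ∈ X*}. -/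
def OmegaE (X : Type*) : Set (FD (Letter X)) :=
  {a | ∃ u : List X, a = ⟨[], Letter.e, u.map Letter.pos⟩}

/-- Ω_X = {[uxv]_{|u|+1} : x ∈ X, u, v ∈ gp⟨X⟩}. -/
def OmegaX (X : Type*) : Set (FD (Letter X)) :=
  {a | ∃ (x : X) (u v : List (X × Bool)), Reduced u ∧ Reduced v ∧
    a = ⟨u.map pm, Letter.pos x, v.map pm⟩}

/-- Ω_{X⁻¹} = {[ux⁻¹v]_{|u|+1} : x ∈ X, u ∈ X*, v ∈ (X^{±1})*, ux⁻¹v reduced}. -/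
def OmegaInv (X : Type*) : Set (FD (Letter X)) :=
  {a | ∃ (x : X) (u : List X) (v : List (X × Bool)),
    Reduced ((u.map fun y => (y, true)) ++ (x, false) :: v) ∧
    a = ⟨u.map Letter.pos, Letter.neg x, v.map pm⟩}

/-- Inversion of a single letter. -/
def linv {X : Type*} : Letter X → Letter X
  | Letter.pos x => Letter.neg x
  | Letter.neg x => Letter.pos x
  | Letter.e => Letter.e

/-- The formal inverse w⁻¹ of a word over X^{±1}. -/
def invw {X : Type*} (L : List (X × Bool)) : List (X × Bool) :=
  L.reverse.map fun p => (p.1, !p.2)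

/-!
In a disemigroup with bar unit `e`, if `a ⊢ b = e = b ⊣ a` then `b = e ⊣ b`, while `a` and `b` both
commute with `e` in the sense that `a ⊢ e = e ⊣ a`. In the free digroup all letters, hence all
elements, therefore commute with `e`, and the elements `e ⊣ a` form a copy of the free group. The
inverse of `a` is then the copy of the group inverse of the image of `a` in the free group. A
reduced word outside `X*` has in this copy the representative centered at its first letter in
`X⁻¹`, because a letter in `X⁻¹`, being an inverse, absorbs `e` on the left.
-/

/-- A set with two associative operations, `vd` for `⊢` and `dv` for `⊣`, that satisfy the
disemigroup (dimonoid) laws. -/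
class Disemigroup (D : Type*) where
  vd : D → D → D
  dv : D → D → D
  vd_assoc (a b c : D) : vd (vd a b) c = vd a (vd b c)
  dv_assoc (a b c : D) : dv (dv a b) c = dv a (dv b c)
  vd_dv_assoc (a b c : D) : dv (vd a b) c = vd a (dv b c)
  dv_vd_eq (a b c : D) : dv a (vd b c) = dv a (dv b c)
  dv_vd_assoc (a b c : D) : vd (dv a b) c = vd a (vd b c)

/-- A disemigroup together with a bar unit, written `1` (the `e` of the paper); it is a digroup
when every element has an inverse. -/
class UnitalDisemigroup (D : Type*) extends Disemigroup D, One D where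
  one_vd (a : D) : vd 1 a = a
  dv_one (a : D) : dv a 1 = a

-- `▷` is `⊢` and `◁` is `⊣` (a Mathlib token): the arrow points at the factor keeping its center.
local notation:70 a:70 " ▷ " b:71 => Disemigroup.vd a b
local notation:70 a:70 " ◁ " b:71 => Disemigroup.dv a b

open Disemigroup UnitalDisemigroup

section UnitalDisemigroup

variable {D : Type*} [UnitalDisemigroup D] {a b c : D}

/-- `IsInverse a b` says that `b` satisfies the two equations defining the digroup inverse `a†`. -/
structure IsInverse (a b : D) : Prop where
  vd_eq_one : a ▷ b = 1
  dv_eq_one : b ◁ a = 1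

theorem left_inv_eq_one_dv_right_inv (hb : b ◁ a = 1) (hc : a ▷ c = 1) : b = 1 ◁ c :=
  calc
    b = b ◁ (a ▷ c) := by rw [hc, dv_one]
    _ = (b ◁ a) ◁ c := by rw [dv_vd_eq, dv_assoc]
    _ = 1 ◁ c := by rw [hb]

namespace IsInverse

theorem one_dv (h : IsInverse a b) : 1 ◁ b = b :=
  (left_inv_eq_one_dv_right_inv h.dv_eq_one h.vd_eq_one).symm

theorem vd_one (h : IsInverse a b) : b ▷ 1 = b :=
  calc
    b ▷ 1 = (b ◁ a) ▷ b := by rw [← h.vd_eq_one, dv_vd_assoc]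
    _ = b := by rw [h.dv_eq_one, one_vd]

theorem unique (hb : IsInverse a b) (hc : IsInverse a c) : b = c :=
  (left_inv_eq_one_dv_right_inv hb.dv_eq_one hc.vd_eq_one).trans hc.one_dv

theorem left_vd_one_eq_one_dv (h : IsInverse a b) : a ▷ 1 = 1 ◁ a :=
  calc
    a ▷ 1 = (a ▷ b) ◁ a := by rw [vd_dv_assoc, h.dv_eq_one]
    _ = 1 ◁ a := by rw [h.vd_eq_one]

theorem right_vd_one_eq_one_dv (h : IsInverse a b) : b ▷ 1 = 1 ◁ b :=
  h.vd_one.trans h.one_dv.symm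

theorem dv_dv_cancel_right (h : IsInverse a b) (c : D) : c ◁ a ◁ b = c := by
  rw [dv_assoc, ← dv_vd_eq, h.vd_eq_one, dv_one]

theorem dv_dv_cancel_left (h : IsInverse a b) (c : D) : c ◁ b ◁ a = c := by
  rw [dv_assoc, h.dv_eq_one, dv_one]

end IsInverse

theorem vd_one_dv (ha : a ▷ 1 = 1 ◁ a) (b : D) : a ▷ (1 ◁ b) = 1 ◁ (a ▷ b) := by
  rw [← vd_dv_assoc, ha, dv_assoc, dv_vd_eq]

theorem vd_vd_one_eq_one_dv (ha : a ▷ 1 = 1 ◁ a) (hb : b ▷ 1 = 1 ◁ b) :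
    a ▷ b ▷ 1 = 1 ◁ (a ▷ b) := by
  rw [vd_assoc, hb, vd_one_dv ha]

theorem dv_vd_one_eq_one_dv (ha : a ▷ 1 = 1 ◁ a) (hb : b ▷ 1 = 1 ◁ b) :
    a ◁ b ▷ 1 = 1 ◁ (a ◁ b) := by
  rw [dv_vd_assoc, hb, vd_one_dv ha, dv_vd_eq]

end UnitalDisemigroup

section

variable {X : Type*}

theorem pm_of_snd_eq_false {l : X × Bool} (hl : l.2 = false) : pm l = .neg l.1 := by
  simp [pm, hl]

theorem strip_map_pm (L : List (X × Bool)) : strip (L.map pm) = L := by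
  induction L with
  | nil => rfl
  | cons a L ih => obtain ⟨x, _ | _⟩ := a <;> simpa [strip, pm] using ih

theorem mk_invw_hat (w : List (Letter X)) :
    FreeGroup.mk (invw (hat w)) = (FreeGroup.mk (strip w))⁻¹ := by
  let := Classical.decEq X
  have mk_hat : FreeGroup.mk (hat w) = FreeGroup.mk (strip w) := FreeGroup.reduce.self
  rw [← mk_hat, FreeGroup.inv_mk]
  simp [invw, FreeGroup.invRev]

instance {Y : Type*} : Disemigroup (FD Y) where
  vd := FD.vd
  dv := FD.dv
  vd_assoc a b c := by simp [FD.vd]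
  dv_assoc a b c := by simp [FD.dv]
  vd_dv_assoc a b c := by simp [FD.vd, FD.dv]
  dv_vd_eq a b c := by simp [FD.vd, FD.dv]
  dv_vd_assoc a b c := by simp [FD.vd, FD.dv]

theorem mk_strip_word_vd (a b : FD (Letter X)) :
    FreeGroup.mk (strip (a.vd b).word) =
      FreeGroup.mk (strip a.word) * FreeGroup.mk (strip b.word) := by
  simp [FD.vd, FD.word, strip]

theorem mk_strip_word_dv (a b : FD (Letter X)) :
    FreeGroup.mk (strip (a.dv b).word) =
      FreeGroup.mk (strip a.word) * FreeGroup.mk (strip b.word) := by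
  simp [FD.dv, FD.word, strip]

theorem mk_strip_word_eq_of_rel {a b : FD (Letter X)} (h : rel X a b) :
    FreeGroup.mk (strip a.word) = FreeGroup.mk (strip b.word) := by
  rcases h with ⟨x, rfl, rfl⟩ | ⟨x, rfl, rfl⟩ | ⟨y, rfl, rfl⟩ | ⟨y, rfl, rfl⟩
  · exact mul_inv_cancel (FreeGroup.of x)
  · exact inv_mul_cancel (FreeGroup.of x)
  all_goals simp [FD.word, strip]

theorem mk_strip_word_eq_of_dCongr {a b : FD (Letter X)} (h : DCongr (rel X) a b) :
    FreeGroup.mk (strip a.word) = FreeGroup.mk (strip b.word) := by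
  induction h with
  | of h => exact mk_strip_word_eq_of_rel h
  | refl => rfl
  | symm _ ih => exact ih.symm
  | trans _ _ ih₁ ih₂ => exact ih₁.trans ih₂
  | vd _ _ ih₁ ih₂ => rw [mk_strip_word_vd, mk_strip_word_vd, ih₁, ih₂]
  | dv _ _ ih₁ ih₂ => rw [mk_strip_word_dv, mk_strip_word_dv, ih₁, ih₂]

namespace DQ

instance : Disemigroup (DQ X) where
  vd := DQ.vd
  dv := DQ.dv
  vd_assoc := by rintro ⟨a⟩ ⟨b⟩ ⟨c⟩; exact congrArg cls (vd_assoc a b c)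
  dv_assoc := by rintro ⟨a⟩ ⟨b⟩ ⟨c⟩; exact congrArg cls (dv_assoc a b c)
  vd_dv_assoc := by rintro ⟨a⟩ ⟨b⟩ ⟨c⟩; exact congrArg cls (vd_dv_assoc a b c)
  dv_vd_eq := by rintro ⟨a⟩ ⟨b⟩ ⟨c⟩; exact congrArg cls (dv_vd_eq a b c)
  dv_vd_assoc := by rintro ⟨a⟩ ⟨b⟩ ⟨c⟩; exact congrArg cls (dv_vd_assoc a b c)

/-- The generator of the free digroup given by a letter. -/
def of (y : Letter X) : DQ X := cls ⟨[], y, []⟩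

theorem cls_dv_of (p s : List (Letter X)) (c y : Letter X) :
    cls ⟨p, c, s⟩ ◁ of y = cls ⟨p, c, s ++ [y]⟩ :=
  congrArg cls (by simp [FD.dv])

theorem cls_induction {P : DQ X → Prop} {c : Letter X} (center : P (of c))
    (of_vd : ∀ y a, P a → P (of y ▷ a)) (dv_of : ∀ a y, P a → P (a ◁ of y))
    (p s : List (Letter X)) : P (cls ⟨p, c, s⟩) := by
  induction p with
  | cons y p ih => exact of_vd y _ ih
  | nil =>
    induction s using List.reverseRecOn with
    | nil => exact center
    | append_singleton s y ih => simpa only [cls_dv_of] using dv_of _ y ih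

theorem induction {P : DQ X → Prop} (letter : ∀ y, P (of y))
    (of_vd : ∀ y a, P a → P (of y ▷ a)) (dv_of : ∀ a y, P a → P (a ◁ of y))
    (a : DQ X) : P a := by
  obtain ⟨⟨p, c, s⟩, rfl⟩ := Quot.exists_rep a
  exact cls_induction (letter c) of_vd dv_of p s

theorem of_e_vd_of (y : Letter X) : of .e ▷ of y = of y :=
  Quot.sound (.of (.inr (.inr (.inr ⟨y, rfl, rfl⟩))))

theorem of_dv_of_e (y : Letter X) : of y ◁ of .e = of y :=
  Quot.sound (.of (.inr (.inr (.inl ⟨y, rfl, rfl⟩))))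

instance : UnitalDisemigroup (DQ X) where
  one := unitE X
  one_vd := induction of_e_vd_of
    (fun y a _ => (vd_assoc _ _ a).symm.trans (congrArg (· ▷ a) (of_e_vd_of y)))
    (fun a y ha => (vd_dv_assoc _ a _).symm.trans (congrArg (· ◁ of y) ha))
  dv_one := induction of_dv_of_e
    (fun y a ha => (vd_dv_assoc _ a _).trans (congrArg (of y ▷ ·) ha))
    (fun a y _ => (dv_assoc a _ _).trans (congrArg (a ◁ ·) (of_dv_of_e y)))

theorem isInverse_of (x : X) : IsInverse (of (.pos x)) (of (.neg x)) where
  vd_eq_one := Quot.sound (.of (.inl ⟨x, rfl, rfl⟩))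
  dv_eq_one := Quot.sound (.of (.inr (.inl ⟨x, rfl, rfl⟩)))

theorem of_vd_one (y : Letter X) : of y ▷ 1 = 1 ◁ of y := by
  cases y with
  | pos x => exact (isInverse_of x).left_vd_one_eq_one_dv
  | neg x => exact (isInverse_of x).right_vd_one_eq_one_dv
  | e => exact (one_vd 1).trans (dv_one 1).symm

theorem vd_one_eq_one_dv (a : DQ X) : a ▷ 1 = 1 ◁ a := by
  induction a using DQ.induction with
  | letter y => exact of_vd_one y
  | of_vd y a ih => exact vd_vd_one_eq_one_dv (of_vd_one y) ih
  | dv_of a y ih => exact dv_vd_one_eq_one_dv ih (of_vd_one y)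

theorem one_dv_cls_neg (x : X) (p s : List (Letter X)) :
    1 ◁ cls ⟨p, .neg x, s⟩ = cls ⟨p, .neg x, s⟩ := by
  refine cls_induction (P := fun a => 1 ◁ a = a) (isInverse_of x).one_dv
    (fun y a ha => ?_) (fun a y ha => ?_) p s
  · rw [← vd_one_dv (of_vd_one y), ha]
  · rw [← dv_assoc, ha]

/-- The homomorphism onto the free group that sends `e` to the identity; it maps both operations to
the multiplication. -/
def toFreeGroup : DQ X → FreeGroup X :=
  Quot.lift (fun a => FreeGroup.mk (strip a.word)) fun _ _ => mk_strip_word_eq_of_dCongr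

theorem toFreeGroup_vd (a b : DQ X) : toFreeGroup (a ▷ b) = toFreeGroup a * toFreeGroup b := by
  obtain ⟨a⟩ := a
  obtain ⟨b⟩ := b
  exact mk_strip_word_vd a b

theorem toFreeGroup_dv (a b : DQ X) : toFreeGroup (a ◁ b) = toFreeGroup a * toFreeGroup b := by
  obtain ⟨a⟩ := a
  obtain ⟨b⟩ := b
  exact mk_strip_word_dv a b

theorem cls_append (p s t : List (Letter X)) (c : Letter X) :
    cls ⟨p, c, s ++ t⟩ = t.foldl (fun a y => a ◁ of y) (cls ⟨p, c, s⟩) := by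
  induction t using List.reverseRecOn with
  | nil => simp
  | append_singleton t y ih => simp [← ih, cls_dv_of]

theorem dv_of_pm_dv_of_pm_not (a : DQ X) (x : X) (b : Bool) :
    a ◁ of (pm (x, b)) ◁ of (pm (x, !b)) = a := by
  cases b
  · exact (isInverse_of x).dv_dv_cancel_left a
  · exact (isInverse_of x).dv_dv_cancel_right a

/-- The section `u ↦ [eu]₁` of `toFreeGroup`, whose image is the group part `{e ⊣ a}` of the free
digroup. -/
def ofFreeGroup : FreeGroup X → DQ X :=
  Quot.lift (fun L => cls ⟨[], .e, L.map pm⟩) <| by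
    rintro _ _ ⟨⟩
    simp only [List.map_append, List.map_cons, cls_append, List.foldl_cons, dv_of_pm_dv_of_pm_not]

theorem ofFreeGroup_one : ofFreeGroup (1 : FreeGroup X) = 1 := rfl

theorem toFreeGroup_ofFreeGroup (g : FreeGroup X) : toFreeGroup (ofFreeGroup g) = g := by
  obtain ⟨L, rfl⟩ := Quot.exists_rep g
  exact congrArg FreeGroup.mk (strip_map_pm L)

theorem ofFreeGroup_mk_dv_of_pm (L : List (X × Bool)) (l : X × Bool) :
    ofFreeGroup (FreeGroup.mk L) ◁ of (pm l) = ofFreeGroup (FreeGroup.mk (L ++ [l])) := by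
  change cls ⟨[], .e, L.map pm⟩ ◁ of (pm l) = cls ⟨[], .e, (L ++ [l]).map pm⟩
  rw [cls_dv_of, List.map_append, List.map_singleton]

theorem ofFreeGroup_dv_of (g : FreeGroup X) (y : Letter X) :
    ofFreeGroup g ◁ of y = ofFreeGroup (g * toFreeGroup (of y)) := by
  obtain ⟨L, rfl⟩ := Quot.exists_rep g
  cases y with
  | e => exact (dv_one _).trans (congrArg ofFreeGroup (mul_one _).symm)
  | pos x => exact ofFreeGroup_mk_dv_of_pm L (x, true)
  | neg x => exact ofFreeGroup_mk_dv_of_pm L (x, false)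

theorem ofFreeGroup_dv (g : FreeGroup X) (a : DQ X) :
    ofFreeGroup g ◁ a = ofFreeGroup (g * toFreeGroup a) := by
  induction a using DQ.induction generalizing g with
  | letter y => exact ofFreeGroup_dv_of g y
  | of_vd y a ih => rw [dv_vd_eq, ← dv_assoc, ofFreeGroup_dv_of, ih, toFreeGroup_vd, mul_assoc]
  | dv_of a y ih => rw [← dv_assoc, ih, ofFreeGroup_dv_of, toFreeGroup_dv, mul_assoc]

theorem one_dv_eq_ofFreeGroup (a : DQ X) : 1 ◁ a = ofFreeGroup (toFreeGroup a) := by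
  rw [← ofFreeGroup_one, ofFreeGroup_dv, one_mul]

theorem vd_ofFreeGroup (a : DQ X) (g : FreeGroup X) :
    a ▷ ofFreeGroup g = ofFreeGroup (toFreeGroup a * g) :=
  calc
    a ▷ ofFreeGroup g = a ▷ (1 ◁ ofFreeGroup g) := by
      rw [one_dv_eq_ofFreeGroup, toFreeGroup_ofFreeGroup]
    _ = 1 ◁ (a ▷ ofFreeGroup g) := vd_one_dv (vd_one_eq_one_dv a) _
    _ = ofFreeGroup (toFreeGroup a * g) := by
      rw [one_dv_eq_ofFreeGroup, toFreeGroup_vd, toFreeGroup_ofFreeGroup]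

theorem isInverse_iff {a b : DQ X} : IsInverse a b ↔ b = ofFreeGroup (toFreeGroup a)⁻¹ := by
  have h : IsInverse a (ofFreeGroup (toFreeGroup a)⁻¹) :=
    { vd_eq_one := by rw [vd_ofFreeGroup, mul_inv_cancel, ofFreeGroup_one]
      dv_eq_one := by rw [ofFreeGroup_dv, inv_mul_cancel, ofFreeGroup_one] }
  exact ⟨fun hb => hb.unique h, fun hb => hb ▸ h⟩

end DQ

theorem toNF_succ {L : List (X × Bool)} {i : ℕ} (hi : i < L.length) :
    toNF L (i + 1) = ⟨(L.take i).map pm, pm L[i], (L.drop (i + 1)).map pm⟩ := by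
  simp [toNF, hi]

theorem word_toNF_succ {L : List (X × Bool)} {i : ℕ} (hi : i < L.length) :
    (toNF L (i + 1)).word = L.map pm := by
  simp only [toNF_succ hi, FD.word]
  rw [← List.map_cons, ← List.drop_eq_getElem_cons hi, ← List.map_append, List.take_append_drop]

theorem exists_toNF_lam_eq {L : List (X × Bool)} (hL : ¬ L.all (fun a => a.2)) :
    ∃ x p s, toNF L (lam L) = ⟨p, .neg x, s⟩ ∧ p ++ .neg x :: s = L.map pm := by
  have hlt : L.findIdx (fun p => !p.2) < L.length :=
    List.findIdx_lt_length.2 (by simpa using hL)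
  have sign : (L[L.findIdx (fun p => !p.2)]).2 = false := by
    simpa using List.findIdx_getElem (w := hlt)
  have hNF := toNF_succ hlt
  rw [pm_of_snd_eq_false sign] at hNF
  exact ⟨_, _, _, hNF, (congrArg FD.word hNF).symm.trans (word_toNF_succ hlt)⟩

/-- The normal form of the element `[eL]₁` of the digroup, for a reduced word `L`: it is `[eL]₁`
itself if `L ∈ X*`, and `[L]_{λ(L)}` otherwise. -/
def groupNF (L : List (X × Bool)) : DQ X :=
  if L.all (fun a => a.2) then cls ⟨[], .e, L.map pm⟩ else cls (toNF L (lam L))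

theorem groupNF_eq_ofFreeGroup (L : List (X × Bool)) :
    groupNF L = DQ.ofFreeGroup (FreeGroup.mk L) := by
  unfold groupNF
  split_ifs with hL
  · rfl
  · obtain ⟨x, p, s, hNF, hword⟩ := exists_toNF_lam_eq hL
    calc
      cls (toNF L (lam L)) = 1 ◁ cls ⟨p, .neg x, s⟩ := by rw [hNF, DQ.one_dv_cls_neg]
      _ = DQ.ofFreeGroup (FreeGroup.mk (strip (p ++ .neg x :: s))) := DQ.one_dv_eq_ofFreeGroup _
      _ = DQ.ofFreeGroup (FreeGroup.mk L) := by rw [hword, strip_map_pm]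

end

theorem dag_of_normal_form_general (X : Type*) (q : FD (Letter X)) (b : DQ X) :
    IsInverse (cls q) b ↔ b = groupNF (invw (hat q.word)) := by
  rw [DQ.isInverse_iff, groupNF_eq_ofFreeGroup, mk_invw_hat]
  rfl

/-- The inverse in the digroup Disgp⟨X^{±1} ∪ {e} | S⟩: for a normal form
[q]_n, the unique two-sided inverse of its class is the class of
[e(q̂)⁻¹]₁ if (q̂)⁻¹ ∈ X*, and of [(q̂)⁻¹]_{λ((q̂)⁻¹)} otherwise. -/
theorem dag_of_normal_form (X : Type*) (q : FD (Letter X))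
    (hq : q ∈ OmegaE X ∪ OmegaX X ∪ OmegaInv X) :
    DQ.vd (cls q)
        (if (invw (hat q.word)).all (fun a => a.2) then
          cls ⟨[], Letter.e, (invw (hat q.word)).map pm⟩
        else cls (toNF (invw (hat q.word)) (lam (invw (hat q.word))))) = unitE X ∧
    DQ.dv
        (if (invw (hat q.word)).all (fun a => a.2) then
          cls ⟨[], Letter.e, (invw (hat q.word)).map pm⟩
        else cls (toNF (invw (hat q.word)) (lam (invw (hat q.word)))))
        (cls q) = unitE X ∧
    ∀ b : DQ X, DQ.vd (cls q) b = unitE X → DQ.dv b (cls q) = unitE X →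
      b = (if (invw (hat q.word)).all (fun a => a.2) then
            cls ⟨[], Letter.e, (invw (hat q.word)).map pm⟩
          else cls (toNF (invw (hat q.word)) (lam (invw (hat q.word))))) := by
  have inverse_iff := dag_of_normal_form_general X q
  have h := (inverse_iff _).2 rfl
  exact ⟨h.vd_eq_one, h.dv_eq_one, fun b hvd hdv => (inverse_iff b).1 ⟨hvd, hdv⟩⟩
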